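/- For every natural number N, a(3N + 1) = Σ_{l=1}^{2N+1} Σ_{(n1, n2) ∈ ℕ², 2n1 + n2 = 3l − 1} b(N + l, n1, n2), where each inner sum is finite since 2n1 + n2 = 3l − 1 forces n1 ≤ ⌊(3l−1)/2⌋ and n2 ≤ 3l − 1. -/

import Mathlib

open scoped BigOperators

/-! The two recurrences are a single recurrence on different groups: grade `ℤ³` by the weight
`w (m, n₁, n₂) = 3 m - 2 n₁ - n₂`. The nine steps of the recurrence for `b` have weights `1, …, 9`,
and its coefficients depend on the weight only. Summing `b` over the fibers of `w` therefore gives a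
solution of the recurrence on `ℤ` with steps `1, …, 9`, and a solution of the latter that vanishes
at negative integers is determined by its value at `0`; so `a n` is the sum of `b` over `w = n`.
The nine steps lie in the cone `0 ≤ n₁`, `0 ≤ n₂`, `n₁ + n₂ ≤ m`, hence so does the support of `b`,
and the cone meets `w = n` only in the range `n / 3 ≤ m ≤ n`. -/

open Function

section FiberSum

variable {V R : Type*} [AddCommMonoid R]

/-- The sum of `f` over the fiber of `w` above `n`, with value `0` if `f` has infinite support on
that fiber. -/
noncomputable def fiberSum (w : V → ℤ) (f : V → R) (n : ℤ) : R :=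
  ∑ᶠ v : w ⁻¹' {n}, f v

theorem fiberSum_eq_zero_of_neg {w : V → ℤ} {f : V → R} (hf : ∀ v ∈ support f, 0 ≤ w v)
    {n : ℤ} (hn : n < 0) : fiberSum w f n = 0 :=
  finsum_eq_zero_of_forall_eq_zero fun v => by_contra fun hv =>
    (hf v hv).not_gt (v.2.trans_lt hn)

theorem fiberSum_zero_of_forall_ne [AddZeroClass V] {w : V →+ ℤ} {f : V → R}
    (hf : ∀ v, w v = 0 → v ≠ 0 → f v = 0) : fiberSum w f 0 = f 0 :=
  finsum_eq_single (fun v : w ⁻¹' {0} => f v) ⟨0, map_zero w⟩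
    fun v hv => hf v v.2 fun h => hv (Subtype.ext h)

end FiberSum

/-- Subtraction of `x` as a bijection between fibers of an additive map to `ℤ`. -/
def fiberSubRight {V : Type*} [AddGroup V] (w : V →+ ℤ) (n : ℤ) (x : V) :
    w ⁻¹' {n} ≃ w ⁻¹' {n - w x} :=
  (Equiv.subRight x).subtypeEquiv fun v => by simp

section Recurrence

variable {ι V R : Type*} [Fintype ι] [AddCommGroup V] [CommRing R]

/-- The function `f` solves the linear recurrence with steps `s i` on the group `V` graded by `w`,
where the coefficients `c i` depend on the degree only. Nothing is required in degree `0`. -/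
def SatisfiesRecurrence (w : V →+ ℤ) (γ : R) (c : ι → ℤ → R) (s : ι → V) (f : V → R) : Prop :=
  ∀ v, w v ≠ 0 → γ * w v * f v = ∑ i, c i (w v) * f (v - s i)

variable {w : V →+ ℤ} {γ : R} {c : ι → ℤ → R} {s : ι → V} {f g : V → R}

namespace SatisfiesRecurrence

theorem of_nonneg [PartialOrder V] [IsOrderedAddMonoid V] (hs : ∀ i, 0 ≤ s i)
    (hf : ∀ v, ¬0 ≤ v → f v = 0)
    (hrec : ∀ v, 0 ≤ v → w v ≠ 0 → γ * w v * f v = ∑ i, c i (w v) * f (v - s i)) :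
    SatisfiesRecurrence w γ c s f := by
  intro v hw
  by_cases hv : 0 ≤ v
  · exact hrec v hv hw
  · have hv_sub (i : ι) : ¬0 ≤ v - s i := fun h => hv ((hs i).trans (sub_nonneg.mp h))
    simp [hf v hv, hf _ (hv_sub _)]

protected theorem sub (hf : SatisfiesRecurrence w γ c s f) (hg : SatisfiesRecurrence w γ c s g) :
    SatisfiesRecurrence w γ c s (f - g) := by
  intro v hw
  simp only [Pi.sub_apply, mul_sub, Finset.sum_sub_distrib, hf v hw, hg v hw]

protected theorem fiberSum (hf : SatisfiesRecurrence w γ c s f)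
    (hfin : ∀ n, HasFiniteSupport fun v : w ⁻¹' {n} => f v) :
    SatisfiesRecurrence (.id ℤ) γ c (w ∘ s) (fiberSum w f) := by
  intro n hn
  have hshift (i : ι) : HasFiniteSupport fun v : w ⁻¹' {n} => f (v - s i) :=
    HasFiniteSupport.comp_of_injective (f := fun v : w ⁻¹' {n - w (s i)} => f v)
      (fiberSubRight w n (s i)).injective (hfin _)
  calc γ * n * ∑ᶠ v : w ⁻¹' {n}, f v
      = ∑ᶠ v : w ⁻¹' {n}, ∑ i, c i n * f (v - s i) := by
        rw [mul_finsum' _ _ (hfin n)]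
        refine finsum_congr fun ⟨v, hv⟩ => ?_
        obtain rfl : w v = n := hv
        exact hf v hn
    _ = ∑ i, c i n * ∑ᶠ v : w ⁻¹' {n}, f (v - s i) := by
        rw [finsum_sum_comm _ _ fun i _ => (hshift i).subset (support_mul_subset_right _ _)]
        exact Finset.sum_congr rfl fun i _ => (mul_finsum' _ _ (hshift i)).symm
    _ = ∑ i, c i n * ∑ᶠ v : w ⁻¹' {n - w (s i)}, f v := by
        refine Finset.sum_congr rfl fun i _ => ?_
        rw [← finsum_comp_equiv (fiberSubRight w n (s i))]
        rfl

variable [NoZeroDivisors R] [CharZero R]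

theorem support_subset (hf : SatisfiesRecurrence w γ c s f) (hγ : γ ≠ 0) {h : V →+ ℤ}
    (hs : ∀ i, 0 < h (s i)) (hf_neg : ∀ v, h v < 0 → f v = 0) {C : Set V}
    (hC : ∀ i, ∀ v ∈ C, v + s i ∈ C) (hC_zero : ∀ v, w v = 0 → f v ≠ 0 → v ∈ C) :
    support f ⊆ C := by
  have hvanish (k : ℕ) : ∀ v, h v < k → v ∉ C → f v = 0 := by
    induction k with
    | zero => exact fun v hv _ => hf_neg v hv
    | succ k ih =>
      intro v hv hvC
      by_cases hw : w v = 0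
      · exact not_imp_comm.mp (hC_zero v hw) hvC
      have hpred (i : ι) : f (v - s i) = 0 := by
        refine ih _ ?_ fun hmem => hvC (by simpa using hC i _ hmem)
        have := hs i
        rw [map_sub]
        omega
      have hmul : γ * w v * f v = 0 := by simp [hf v hw, hpred]
      exact (mul_eq_zero.mp hmul).resolve_left (mul_ne_zero hγ (Int.cast_ne_zero.mpr hw))
  exact fun v hv => by_contra fun hvC => hv (hvanish ((h v).toNat + 1) v (by omega) hvC)

theorem eq_of_apply_zero_eq {d : ι → ℤ} {a a' : ℤ → R}
    (ha : SatisfiesRecurrence (.id ℤ) γ c d a) (ha' : SatisfiesRecurrence (.id ℤ) γ c d a')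
    (hγ : γ ≠ 0) (hd : ∀ i, 0 < d i) (ha_neg : ∀ n < 0, a n = 0) (ha'_neg : ∀ n < 0, a' n = 0)
    (h_zero : a 0 = a' 0) : a = a' := by
  have hsupp : support (a - a') ⊆ ∅ :=
    (ha.sub ha').support_subset hγ (h := .id ℤ) hd
      (fun n hn => by simp [ha_neg n hn, ha'_neg n hn]) (fun _ _ => id)
      fun n hn hne => hne (by obtain rfl : n = 0 := hn; simp [h_zero])
  exact sub_eq_zero.mp (support_eq_empty_iff.mp (Set.subset_empty_iff.mp hsupp))

end SatisfiesRecurrence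

end Recurrence

section Buhring

/-- The degree `3 m - 2 n₁ - n₂` of the index `(m, n₁, n₂)`. -/
def buhringWeight : ℤ × ℤ × ℤ →+ ℤ where
  toFun v := 3 * v.1 - 2 * v.2.1 - v.2.2
  map_zero' := by simp
  map_add' v v' := by simp only [Prod.fst_add, Prod.snd_add]; ring

theorem buhringWeight_apply (m n₁ n₂ : ℤ) :
    buhringWeight (m, n₁, n₂) = 3 * m - 2 * n₁ - n₂ := rfl

/-- The index shifts in the recurrence for `b`, listed by increasing weight. -/
def buhringStep : Fin 9 → ℤ × ℤ × ℤ :=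
  ![(1, 1, 0), (1, 0, 1), (1, 0, 0), (2, 1, 0), (2, 0, 1), (2, 0, 0), (3, 1, 0), (3, 0, 1),
    (3, 0, 0)]

theorem buhringWeight_buhringStep (i : Fin 9) : buhringWeight (buhringStep i) = i + 1 := by
  fin_cases i <;> rfl

theorem buhringWeight_buhringStep_pos (i : Fin 9) : 0 < buhringWeight (buhringStep i) := by
  rw [buhringWeight_buhringStep]
  positivity

theorem buhringStep_nonneg (i : Fin 9) : 0 ≤ buhringStep i := by
  fin_cases i <;> decide

variable {R : Type*} [CommRing R]

theorem sum_mul_sub_buhringStep (c : Fin 9 → R) (f : ℤ × ℤ × ℤ → R) (m n₁ n₂ : ℤ) :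
    ∑ i, c i * f ((m, n₁, n₂) - buhringStep i) =
      c 0 * f (m - 1, n₁ - 1, n₂) + c 1 * f (m - 1, n₁, n₂ - 1) + c 2 * f (m - 1, n₁, n₂)
        + c 3 * f (m - 2, n₁ - 1, n₂) + c 4 * f (m - 2, n₁, n₂ - 1) + c 5 * f (m - 2, n₁, n₂)
        + c 6 * f (m - 3, n₁ - 1, n₂) + c 7 * f (m - 3, n₁, n₂ - 1) + c 8 * f (m - 3, n₁, n₂) := by
  simp [Fin.sum_univ_castSucc, buhringStep]

theorem sum_mul_sub_buhringWeight_buhringStep (c : Fin 9 → R) (a : ℤ → R) (n : ℤ) :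
    ∑ i, c i * a (n - buhringWeight (buhringStep i)) =
      c 0 * a (n - 1) + c 1 * a (n - 2) + c 2 * a (n - 3) + c 3 * a (n - 4) + c 4 * a (n - 5)
        + c 5 * a (n - 6) + c 6 * a (n - 7) + c 7 * a (n - 8) + c 8 * a (n - 9) := by
  simp [Fin.sum_univ_castSucc, buhringWeight_buhringStep]

/-- The integer points of the convex cone spanned by the steps of the recurrence for `b`; it
contains the support of `b`. -/
def buhringCone : Set (ℤ × ℤ × ℤ) :=
  {v | 0 ≤ v.2.1 ∧ 0 ≤ v.2.2 ∧ v.2.1 + v.2.2 ≤ v.1}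

theorem add_buhringStep_mem_buhringCone (i : Fin 9) {v : ℤ × ℤ × ℤ} (hv : v ∈ buhringCone) :
    v + buhringStep i ∈ buhringCone := by
  obtain ⟨h₁, h₂, h₃⟩ := hv
  rw [buhringCone, Set.mem_ofPred_eq]
  fin_cases i <;> simp only [buhringStep, Fin.reduceFinMk, Fin.zero_eta, Fin.mk_one,
    Matrix.cons_val, Prod.fst_add, Prod.snd_add] <;> omega

theorem fst_le_buhringWeight_of_mem_buhringCone {v : ℤ × ℤ × ℤ} (hv : v ∈ buhringCone) :
    v.1 ≤ buhringWeight v := by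
  obtain ⟨m, n₁, n₂⟩ := v
  simp only [buhringCone, Set.mem_ofPred_eq] at hv
  rw [buhringWeight_apply]
  omega

theorem fst_nonneg_of_mem_buhringCone {v : ℤ × ℤ × ℤ} (hv : v ∈ buhringCone) : 0 ≤ v.1 :=
  (add_nonneg hv.1 hv.2.1).trans hv.2.2

-- The bound `(n + 2) / 3` is `⌈n / 3⌉`.
theorem buhringWeight_eq_natCast_iff {v : ℤ × ℤ × ℤ} (hv : v ∈ buhringCone) (n : ℕ) :
    buhringWeight v = n ↔ ∃ m ∈ Finset.Icc ((n + 2) / 3) n, ∃ p : ℕ × ℕ,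
      2 * p.1 + p.2 + n = 3 * m ∧ ((m : ℤ), (p.1 : ℤ), (p.2 : ℤ)) = v := by
  obtain ⟨m, n₁, n₂⟩ := v
  obtain ⟨h₁, h₂, h₃⟩ : 0 ≤ n₁ ∧ 0 ≤ n₂ ∧ n₁ + n₂ ≤ m := hv
  lift n₁ to ℕ using h₁
  lift n₂ to ℕ using h₂
  lift m to ℕ using by omega
  simp only [buhringWeight_apply, Finset.mem_Icc, Prod.exists, Prod.mk.injEq, Nat.cast_inj]
  constructor
  · exact fun hw => ⟨m, by omega, n₁, n₂, by omega, rfl, rfl, rfl⟩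
  · rintro ⟨_, _, _, _, hw, rfl, rfl, rfl⟩
    omega

variable {f : ℤ × ℤ × ℤ → R}

theorem hasFiniteSupport_fiber_buhringWeight (hf : support f ⊆ buhringCone) (n : ℤ) :
    HasFiniteSupport fun v : buhringWeight ⁻¹' {n} => f v := by
  refine Set.Finite.of_finite_image (f := Subtype.val) ?_ Subtype.val_injective.injOn
  refine (Set.finite_Icc (0, 0, 0) (n, n, n)).subset ?_
  rintro _ ⟨⟨⟨m, n₁, n₂⟩, hn⟩, hv, rfl⟩
  have hcone := hf hv
  have hmn : m ≤ n := (fst_le_buhringWeight_of_mem_buhringCone hcone).trans_eq hn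
  simp only [buhringCone, Set.mem_ofPred_eq] at hcone
  simp only [Set.mem_Icc, Prod.mk_le_mk]
  omega

theorem fiberSum_buhringWeight_eq_sum (hf : support f ⊆ buhringCone) (n : ℕ) :
    fiberSum buhringWeight f n = ∑ m ∈ Finset.Icc ((n + 2) / 3) n,
      ∑ᶠ p ∈ {p : ℕ × ℕ | 2 * p.1 + p.2 + n = 3 * m}, f ((m : ℤ), (p.1 : ℤ), (p.2 : ℤ)) := by
  let incl (m : ℕ) (p : ℕ × ℕ) : ℤ × ℤ × ℤ := (m, p.1, p.2)
  let line (m : ℕ) : Set (ℕ × ℕ) := {p | 2 * p.1 + p.2 + n = 3 * m}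
  have hincl (m : ℕ) : Injective (incl m) := by
    rintro ⟨x, y⟩ ⟨x', y'⟩ h
    simpa [incl] using h
  have hline (m : ℕ) : (line m).Finite :=
    (Set.finite_Icc (0, 0) (3 * m, 3 * m)).subset fun ⟨x, y⟩ hp => by
      simp only [line, Set.mem_ofPred_eq] at hp
      simp only [Set.mem_Icc, Prod.mk_le_mk]
      omega
  have hdisj : (Finset.Icc ((n + 2) / 3) n : Set ℕ).PairwiseDisjoint fun m => incl m '' line m :=
    fun m _ m' _ hne => Set.disjoint_left.mpr fun _ ⟨_, _, h⟩ ⟨_, _, h'⟩ =>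
      hne (Nat.cast_injective (R := ℤ) (congrArg Prod.fst (h.trans h'.symm)))
  have hfiber : ∀ v ∈ support f, v ∈ buhringWeight ⁻¹' {(n : ℤ)} ↔
      v ∈ ⋃ m ∈ (Finset.Icc ((n + 2) / 3) n : Set ℕ), incl m '' line m := by
    intro v hv
    simp only [Set.mem_iUnion, exists_prop]
    exact buhringWeight_eq_natCast_iff (hf hv) n
  calc fiberSum buhringWeight f n
      = ∑ᶠ v ∈ buhringWeight ⁻¹' {(n : ℤ)}, f v := finsum_set_coe_eq_finsum_mem _
    _ = ∑ᶠ v ∈ ⋃ m ∈ (Finset.Icc ((n + 2) / 3) n : Set ℕ), incl m '' line m, f v :=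
        finsum_mem_inter_support_eq' f _ _ hfiber
    _ = ∑ m ∈ Finset.Icc ((n + 2) / 3) n, ∑ᶠ v ∈ incl m '' line m, f v := by
        rw [finsum_mem_biUnion hdisj (Finset.finite_toSet _) fun m _ => (hline m).image _,
          finsum_mem_coe_finset]
    _ = _ := Finset.sum_congr rfl fun m _ => finsum_mem_image (hincl m).injOn

theorem fiberSum_buhringWeight_three_mul_add_one (hf : support f ⊆ buhringCone) (N : ℕ) :
    fiberSum buhringWeight f ((3 * N + 1 : ℕ) : ℤ) = ∑ l ∈ Finset.Icc 1 (2 * N + 1),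
      ∑ᶠ p ∈ {p : ℕ × ℕ | 2 * p.1 + p.2 = 3 * l - 1},
        f (((N + l : ℕ) : ℤ), (p.1 : ℤ), (p.2 : ℤ)) := by
  have hIcc : Finset.Icc ((3 * N + 1 + 2) / 3) (3 * N + 1) =
      (Finset.Icc 1 (2 * N + 1)).map (addLeftEmbedding N) := by
    rw [Finset.map_add_left_Icc]
    congr 1 <;> omega
  rw [fiberSum_buhringWeight_eq_sum hf, hIcc, Finset.sum_map]
  refine Finset.sum_congr rfl fun l hl => finsum_mem_congr (Set.ext fun p => ?_) fun _ _ => rfl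
  have := (Finset.mem_Icc.mp hl).1
  simp only [Set.mem_ofPred_eq, addLeftEmbedding_apply]
  omega

variable [NoZeroDivisors R] [CharZero R] {γ : R} {c : Fin 9 → ℤ → R}

theorem SatisfiesRecurrence.support_subset_buhringCone
    (hf : SatisfiesRecurrence buhringWeight γ c buhringStep f) (hγ : γ ≠ 0)
    (hf_neg : ∀ v, ¬0 ≤ v → f v = 0) (hf_zero : ∀ v, buhringWeight v = 0 → v ≠ 0 → f v = 0) :
    support f ⊆ buhringCone := by
  refine hf.support_subset hγ (h := AddMonoidHom.fst ℤ (ℤ × ℤ)) (fun i => ?_)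
    (fun v hv => hf_neg v fun h => h.1.not_gt hv) (fun i _ => add_buhringStep_mem_buhringCone i)
    fun v hw hne => ?_
  · fin_cases i <;> simp [buhringStep]
  · obtain rfl : v = 0 := not_imp_comm.mp (hf_zero v hw) hne
    simp [buhringCone]

theorem SatisfiesRecurrence.eq_fiberSum_buhringWeight {a : ℤ → R}
    (ha : SatisfiesRecurrence (.id ℤ) γ c (buhringWeight ∘ buhringStep) a)
    (hf : SatisfiesRecurrence buhringWeight γ c buhringStep f) (hγ : γ ≠ 0)
    (ha_neg : ∀ n < 0, a n = 0) (hf_supp : support f ⊆ buhringCone)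
    (hf_zero : ∀ v, buhringWeight v = 0 → v ≠ 0 → f v = 0) (h_zero : a 0 = f 0) :
    a = fiberSum buhringWeight f := by
  refine ha.eq_of_apply_zero_eq (hf.fiberSum (hasFiniteSupport_fiber_buhringWeight hf_supp)) hγ
    buhringWeight_buhringStep_pos ha_neg (fun n => fiberSum_eq_zero_of_neg fun v hv => ?_)
    (h_zero.trans (fiberSum_zero_of_forall_ne hf_zero).symm)
  exact (fst_nonneg_of_mem_buhringCone (hf_supp hv)).trans
    (fst_le_buhringWeight_of_mem_buhringCone (hf_supp hv))

end Buhring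

theorem buhring_a_three_N_plus_one_general
    {K : Type*} [Field K] [CharZero K]
    (kap s0 t10 t20 tau L B1 B2 D1 D2 D3 D4 D5 D6 : K)
    (hkap : kap ≠ 0) (hs0 : s0 ≠ 0)
    (b : ℤ → ℤ → ℤ → K)
    (hb_neg : ∀ m n1 n2 : ℤ, (m < 0 ∨ n1 < 0 ∨ n2 < 0) → b m n1 n2 = 0)
    (hb_one : b 0 0 0 = 1)
    (hb_zero : ∀ m n1 n2 : ℤ, 3 * m - 2 * n1 - n2 = 0 → (m, n1, n2) ≠ (0, 0, 0) →
      b m n1 n2 = 0)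
    (hb_rec : ∀ m n1 n2 : ℤ, 0 ≤ m → 0 ≤ n1 → 0 ≤ n2 → 3 * m - 2 * n1 - n2 ≠ 0 →
      6 * kap * s0 * ((3 * m - 2 * n1 - n2 : ℤ) : K) * b m n1 n2 =
        ((((3 * m - 2 * n1 - n2 : ℤ) : K) + tau - 3) ^ 2 - L ^ 2) * b (m - 1) n1 n2
        + (-4 * kap * t10 * (((3 * m - 2 * n1 - n2 : ℤ) : K) + tau - 2) + t20 ^ 2 - B2) *
            b (m - 1) (n1 - 1) n2
        + (-2 * kap * t20 * (((3 * m - 2 * n1 - n2 : ℤ) : K) + tau - 5 / 2) - B1) *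
            b (m - 1) n1 (n2 - 1)
        - D1 * b (m - 2) (n1 - 1) n2 - D2 * b (m - 2) n1 (n2 - 1) - D3 * b (m - 2) n1 n2
        - D4 * b (m - 3) (n1 - 1) n2 - D5 * b (m - 3) n1 (n2 - 1) - D6 * b (m - 3) n1 n2)
    (a : ℤ → K)
    (ha_neg : ∀ n : ℤ, n < 0 → a n = 0)
    (ha_one : a 0 = 1)
    (ha_rec : ∀ n : ℤ, 1 ≤ n →
      6 * kap * s0 * (n : K) * a n =
        (-4 * kap * t10 * ((n : K) + tau - 2) + t20 ^ 2 - B2) * a (n - 1)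
        + (-2 * kap * t20 * ((n : K) + tau - 5 / 2) - B1) * a (n - 2)
        + (((n : K) + tau - 3) ^ 2 - L ^ 2) * a (n - 3)
        - D1 * a (n - 4) - D2 * a (n - 5) - D3 * a (n - 6)
        - D4 * a (n - 7) - D5 * a (n - 8) - D6 * a (n - 9)) :
    ∀ N : ℕ,
      a ((3 * N + 1 : ℕ) : ℤ) =
        ∑ l ∈ Finset.Icc 1 (2 * N + 1),
          ∑ᶠ p ∈ {p : ℕ × ℕ | 2 * p.1 + p.2 = 3 * l - 1},
            b ((N + l : ℕ) : ℤ) (p.1 : ℤ) (p.2 : ℤ) := by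
  let c : Fin 9 → ℤ → K :=
    ![fun n => -4 * kap * t10 * (n + tau - 2) + t20 ^ 2 - B2,
      fun n => -2 * kap * t20 * (n + tau - 5 / 2) - B1,
      fun n => (n + tau - 3) ^ 2 - L ^ 2,
      fun _ => -D1, fun _ => -D2, fun _ => -D3, fun _ => -D4, fun _ => -D5, fun _ => -D6]
  let f (v : ℤ × ℤ × ℤ) : K := b v.1 v.2.1 v.2.2
  have hγ : 6 * kap * s0 ≠ 0 := by simp [hkap, hs0]
  have hf_neg (v) (hv : ¬0 ≤ v) : f v = 0 :=
    hb_neg _ _ _ (by simp only [Prod.le_def, Prod.fst_zero, Prod.snd_zero] at hv; omega)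
  have hf_zero (v) (hw : buhringWeight v = 0) (hv : v ≠ 0) : f v = 0 := hb_zero _ _ _ hw hv
  have hf : SatisfiesRecurrence buhringWeight (6 * kap * s0) c buhringStep f := by
    refine .of_nonneg buhringStep_nonneg hf_neg fun ⟨m, n₁, n₂⟩ ⟨hm, hn₁, hn₂⟩ hw => ?_
    rw [sum_mul_sub_buhringStep]
    simp only [buhringWeight_apply, f, c, Matrix.cons_val]
    linear_combination hb_rec m n₁ n₂ hm hn₁ hn₂ hw
  have ha : SatisfiesRecurrence (.id ℤ) (6 * kap * s0) c (buhringWeight ∘ buhringStep) a := by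
    refine .of_nonneg (fun i => (buhringWeight_buhringStep_pos i).le)
      (fun n hn => ha_neg n (not_le.mp hn)) fun n hn hn0 => ?_
    simp only [comp_apply, sum_mul_sub_buhringWeight_buhringStep, AddMonoidHom.id_apply, c,
      Matrix.cons_val]
    linear_combination ha_rec n (hn.lt_of_ne' hn0)
  have hf_supp := hf.support_subset_buhringCone hγ hf_neg hf_zero
  intro N
  rw [ha.eq_fiberSum_buhringWeight hf hγ ha_neg hf_supp hf_zero (ha_one.trans hb_one.symm),
    fiberSum_buhringWeight_three_mul_add_one hf_supp]

theorem buhring_a_three_N_plus_one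
    (kap s0 t10 t20 tau L B1 B2 D1 D2 D3 D4 D5 D6 : ℝ)
    (hkap : kap = 1 ∨ kap = -1) (hs0 : s0 ≠ 0)
    (b : ℤ → ℤ → ℤ → ℝ)
    (hb_neg : ∀ m n1 n2 : ℤ, (m < 0 ∨ n1 < 0 ∨ n2 < 0) → b m n1 n2 = 0)
    (hb_one : b 0 0 0 = 1)
    (hb_zero : ∀ m n1 n2 : ℤ, 3 * m - 2 * n1 - n2 = 0 → (m, n1, n2) ≠ (0, 0, 0) →
      b m n1 n2 = 0)
    (hb_rec : ∀ m n1 n2 : ℤ, 0 ≤ m → 0 ≤ n1 → 0 ≤ n2 → 3 * m - 2 * n1 - n2 ≠ 0 →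
      6 * kap * s0 * ((3 * m - 2 * n1 - n2 : ℤ) : ℝ) * b m n1 n2 =
        ((((3 * m - 2 * n1 - n2 : ℤ) : ℝ) + tau - 3) ^ 2 - L ^ 2) * b (m - 1) n1 n2
        + (-4 * kap * t10 * (((3 * m - 2 * n1 - n2 : ℤ) : ℝ) + tau - 2) + t20 ^ 2 - B2) *
            b (m - 1) (n1 - 1) n2
        + (-2 * kap * t20 * (((3 * m - 2 * n1 - n2 : ℤ) : ℝ) + tau - 5 / 2) - B1) *
            b (m - 1) n1 (n2 - 1)
        - D1 * b (m - 2) (n1 - 1) n2 - D2 * b (m - 2) n1 (n2 - 1) - D3 * b (m - 2) n1 n2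
        - D4 * b (m - 3) (n1 - 1) n2 - D5 * b (m - 3) n1 (n2 - 1) - D6 * b (m - 3) n1 n2)
    (a : ℤ → ℝ)
    (ha_neg : ∀ n : ℤ, n < 0 → a n = 0)
    (ha_one : a 0 = 1)
    (ha_rec : ∀ n : ℤ, 1 ≤ n →
      6 * kap * s0 * (n : ℝ) * a n =
        (-4 * kap * t10 * ((n : ℝ) + tau - 2) + t20 ^ 2 - B2) * a (n - 1)
        + (-2 * kap * t20 * ((n : ℝ) + tau - 5 / 2) - B1) * a (n - 2)
        + (((n : ℝ) + tau - 3) ^ 2 - L ^ 2) * a (n - 3)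
        - D1 * a (n - 4) - D2 * a (n - 5) - D3 * a (n - 6)
        - D4 * a (n - 7) - D5 * a (n - 8) - D6 * a (n - 9)) :
    ∀ N : ℕ,
      a ((3 * N + 1 : ℕ) : ℤ) =
        ∑ l ∈ Finset.Icc 1 (2 * N + 1),
          ∑ᶠ p ∈ {p : ℕ × ℕ | 2 * p.1 + p.2 = 3 * l - 1},
            b ((N + l : ℕ) : ℤ) (p.1 : ℤ) (p.2 : ℤ) :=
  buhring_a_three_N_plus_one_general kap s0 t10 t20 tau L B1 B2 D1 D2 D3 D4 D5 D6
    (by rcases hkap with rfl | rfl <;> norm_num) hs0 b hb_neg hb_one hb_zero hb_rec a ha_neg ha_one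
    ha_rec
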